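/- Suppose rank Q_N = n and set x̂_N = Q_N⁺r_N. Then x̂_N is the Chebyshev center of P_N, and min_{x ∈ P_N} max_{x̃ ∈ P_N} ‖x − x̃‖ = max_{x ∈ P_N} ‖x − x̂_N‖ = [1 − α_N + (Q_N x̂_N, x̂_N)]^{1/2} / min_i λ_i(N)^{1/2}, where λ_1(N), …, λ_n(N) are the eigenvalues of Q_N. -/

import Mathlib

/-!
The set `P_N` is an ellipsoid centred at `x̂_N`, obtained by dynamic programming.

Let `V_k(z)` be the least cost of a trajectory with `x_k = z`. Then
`V_k(z) = (Q_k z, z) - 2 (r_k, z) + α_k` (`valueFn_isLeast`), by induction on `k`: as a function of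
the previous state `x` the Bellman cost is a quadratic polynomial with leading form `P_k` and linear
part `b = r_k + C_k' S_k F_{k+1} z`. It is nonnegative because costs are, and a quadratic polynomial
bounded below has positive semidefinite leading form and linear part in the range of `P_k`
(`leadingForm_nonneg`, `matVec_pinv_of_nonneg`). So the minimum is attained at `P_k⁺ b`, and its
value, expanded in `z`, gives the recursions for `Q`, `r`, `α` (`valueFn_succ`).

Hence `P_N = {V_N ≤ 1}`. The same range argument gives `Q_N x̂_N = r_N`, and completing the square
turns this into `(Q_N (x - x̂_N), x - x̂_N) ≤ 1 - α_N + (Q_N x̂_N, x̂_N)`. Full rank makes `Q_N`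
positive definite, so the farthest points from `x̂_N` lie along an eigenvector of the least
eigenvalue; central symmetry shows that no other centre does better (`chebyshev_ellipsoid`).
-/

open Matrix
open scoped ENNReal RealInnerProductSpace

/-- `B` is the Moore–Penrose pseudoinverse of `A`. -/
def IsMoorePenrose {ι κ : Type*} [Fintype ι] [Fintype κ]
    (A : Matrix ι κ ℝ) (B : Matrix κ ι ℝ) : Prop :=
  A * B * A = A ∧ B * A * B = B ∧ (A * B)ᵀ = A * B ∧ (B * A)ᵀ = B * A

/-- The Moore–Penrose pseudoinverse `A⁺` (it exists, and is unique, for every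
real matrix). -/
noncomputable def pinv {ι κ : Type*} [Fintype ι] [Fintype κ]
    (A : Matrix ι κ ℝ) : Matrix κ ι ℝ :=
  haveI := Classical.propDecidable (∃ B, IsMoorePenrose A B)
  if h : ∃ B, IsMoorePenrose A B then h.choose else 0

/-- The linear map on Euclidean spaces induced by a matrix. -/
noncomputable def matVec {ι κ : Type*} [Fintype ι] [Fintype κ] [DecidableEq κ]
    (A : Matrix ι κ ℝ) (v : EuclideanSpace ℝ κ) : EuclideanSpace ℝ ι :=
  Matrix.toEuclideanLin A v

/-- The recursively defined matrices `Q_k`: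
`Q_0 = F₀'SF₀ + H₀'R₀H₀`,
`Q_{k+1} = H_{k+1}'R_{k+1}H_{k+1} + F_{k+1}'[S_k − S_kC_kP_k⁺C_k'S_k]F_{k+1}`,
with `P_k = Q_k + C_k'S_kC_k`. -/
noncomputable def Qmat {m n p : ℕ} (F C : ℕ → Matrix (Fin m) (Fin n) ℝ)
    (Hm : ℕ → Matrix (Fin p) (Fin n) ℝ) (S0 : Matrix (Fin m) (Fin m) ℝ)
    (S : ℕ → Matrix (Fin m) (Fin m) ℝ) (R : ℕ → Matrix (Fin p) (Fin p) ℝ) :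
    ℕ → Matrix (Fin n) (Fin n) ℝ
  | 0 => (F 0)ᵀ * S0 * F 0 + (Hm 0)ᵀ * R 0 * Hm 0
  | (k+1) => (Hm (k+1))ᵀ * R (k+1) * Hm (k+1) +
      (F (k+1))ᵀ * (S k - S k * C k *
          pinv (Qmat F C Hm S0 S R k + (C k)ᵀ * S k * C k) * (C k)ᵀ * S k) *
        F (k+1)

/-- The matrices `P_k = Q_k + C_k'S_kC_k`. -/
noncomputable def Pmat {m n p : ℕ} (F C : ℕ → Matrix (Fin m) (Fin n) ℝ)
    (Hm : ℕ → Matrix (Fin p) (Fin n) ℝ) (S0 : Matrix (Fin m) (Fin m) ℝ)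
    (S : ℕ → Matrix (Fin m) (Fin m) ℝ) (R : ℕ → Matrix (Fin p) (Fin p) ℝ)
    (k : ℕ) : Matrix (Fin n) (Fin n) ℝ :=
  Qmat F C Hm S0 S R k + (C k)ᵀ * S k * C k

/-- The recursively defined vectors `r_k`:
`r_0 = H₀'R₀y₀`, `r_{k+1} = F_{k+1}'S_kC_kP_k⁺ r_k + H_{k+1}'R_{k+1}y_{k+1}`. -/
noncomputable def rvec {m n p : ℕ} (F C : ℕ → Matrix (Fin m) (Fin n) ℝ)
    (Hm : ℕ → Matrix (Fin p) (Fin n) ℝ) (S0 : Matrix (Fin m) (Fin m) ℝ)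
    (S : ℕ → Matrix (Fin m) (Fin m) ℝ) (R : ℕ → Matrix (Fin p) (Fin p) ℝ)
    (y : ℕ → EuclideanSpace ℝ (Fin p)) :
    ℕ → EuclideanSpace ℝ (Fin n)
  | 0 => matVec ((Hm 0)ᵀ * R 0) (y 0)
  | (k+1) => matVec ((F (k+1))ᵀ * S k * C k * pinv (Pmat F C Hm S0 S R k))
        (rvec F C Hm S0 S R y k) +
      matVec ((Hm (k+1))ᵀ * R (k+1)) (y (k+1))

/-- The recursively defined numbers `α_k`:
`α_0 = (R₀y₀, y₀)`,
`α_{k+1} = α_k + (R_{k+1}y_{k+1}, y_{k+1}) − (P_k⁺ r_k, r_k)`. -/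
noncomputable def alphaNum {m n p : ℕ} (F C : ℕ → Matrix (Fin m) (Fin n) ℝ)
    (Hm : ℕ → Matrix (Fin p) (Fin n) ℝ) (S0 : Matrix (Fin m) (Fin m) ℝ)
    (S : ℕ → Matrix (Fin m) (Fin m) ℝ) (R : ℕ → Matrix (Fin p) (Fin p) ℝ)
    (y : ℕ → EuclideanSpace ℝ (Fin p)) : ℕ → ℝ
  | 0 => ⟪matVec (R 0) (y 0), y 0⟫
  | (k+1) => alphaNum F C Hm S0 S R y k +
      ⟪matVec (R (k+1)) (y (k+1)), y (k+1)⟫ -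
      ⟪matVec (pinv (Pmat F C Hm S0 S R k)) (rvec F C Hm S0 S R y k),
        rvec F C Hm S0 S R y k⟫

/-- The a posteriori set `𝓖_y`: sequences `(x_0, …, x_N)` consistent with the
model `F_{k+1}x_{k+1} − C_kx_k = f_k`, `F₀x₀ = q`, `y_k = H_kx_k + g_k` and the
constraint `(Sq,q) + Σ_{i<N}(S_if_i,f_i) + Σ_{i≤N}(R_ig_i,g_i) ≤ 1`. -/
def GySeq {m n p : ℕ} (F C : ℕ → Matrix (Fin m) (Fin n) ℝ)
    (Hm : ℕ → Matrix (Fin p) (Fin n) ℝ) (S0 : Matrix (Fin m) (Fin m) ℝ)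
    (S : ℕ → Matrix (Fin m) (Fin m) ℝ) (R : ℕ → Matrix (Fin p) (Fin p) ℝ)
    (y : ℕ → EuclideanSpace ℝ (Fin p)) (N : ℕ) :
    Set (ℕ → EuclideanSpace ℝ (Fin n)) :=
  {x | ⟪matVec S0 (matVec (F 0) (x 0)), matVec (F 0) (x 0)⟫ +
      (∑ i ∈ Finset.range N,
        ⟪matVec (S i) (matVec (F (i+1)) (x (i+1)) - matVec (C i) (x i)),
          matVec (F (i+1)) (x (i+1)) - matVec (C i) (x i)⟫) +
      (∑ i ∈ Finset.range (N+1),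
        ⟪matVec (R i) (y i - matVec (Hm i) (x i)),
          y i - matVec (Hm i) (x i)⟫) ≤ 1}

/-- The minimax a posteriori error
`σ̂(ℓ, N) = inf_a sup_{x ∈ 𝓖_y} |(ℓ, x_N) − a|`. -/
noncomputable def sigmaHatSeq {m n p : ℕ} (F C : ℕ → Matrix (Fin m) (Fin n) ℝ)
    (Hm : ℕ → Matrix (Fin p) (Fin n) ℝ) (S0 : Matrix (Fin m) (Fin m) ℝ)
    (S : ℕ → Matrix (Fin m) (Fin m) ℝ) (R : ℕ → Matrix (Fin p) (Fin p) ℝ)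
    (y : ℕ → EuclideanSpace ℝ (Fin p)) (N : ℕ)
    (ℓ : EuclideanSpace ℝ (Fin n)) : ℝ≥0∞ :=
  ⨅ (a : ℝ), ⨆ (x : ℕ → EuclideanSpace ℝ (Fin n))
      (_ : x ∈ GySeq F C Hm S0 S R y N),
    ENNReal.ofReal |⟪ℓ, x N⟫ - a|

/-! ### Matrices acting on Euclidean space -/

section MatVec

variable {ι κ μ : Type*} [Fintype ι] [Fintype κ] [Fintype μ]
  [DecidableEq κ] [DecidableEq μ]

lemma matVec_mul (A : Matrix ι κ ℝ) (B : Matrix κ μ ℝ) (x : EuclideanSpace ℝ μ) :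
    matVec (A * B) x = matVec A (matVec B x) := by
  simp [matVec, Matrix.toLpLin_apply, Matrix.mulVec_mulVec]

lemma matVec_add_left (A B : Matrix ι κ ℝ) (x : EuclideanSpace ℝ κ) :
    matVec (A + B) x = matVec A x + matVec B x := by
  simp [matVec]

lemma matVec_sub_left (A B : Matrix ι κ ℝ) (x : EuclideanSpace ℝ κ) :
    matVec (A - B) x = matVec A x - matVec B x := by
  simp [matVec]

lemma matVec_add (A : Matrix ι κ ℝ) (x y : EuclideanSpace ℝ κ) :
    matVec A (x + y) = matVec A x + matVec A y := by
  simp [matVec]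

lemma matVec_sub (A : Matrix ι κ ℝ) (x y : EuclideanSpace ℝ κ) :
    matVec A (x - y) = matVec A x - matVec A y := by
  simp [matVec]

lemma matVec_smul (A : Matrix ι κ ℝ) (t : ℝ) (x : EuclideanSpace ℝ κ) :
    matVec A (t • x) = t • matVec A x := by
  simp [matVec]

lemma inner_matVec_left [DecidableEq ι] (A : Matrix ι κ ℝ) (x : EuclideanSpace ℝ κ)
    (y : EuclideanSpace ℝ ι) : ⟪matVec A x, y⟫ = ⟪x, matVec Aᵀ y⟫ := by
  simp only [matVec, Matrix.toLpLin_apply, EuclideanSpace.inner_eq_star_dotProduct, star_trivial]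
  rw [Matrix.dotProduct_mulVec, Matrix.mulVec_transpose, dotProduct_comm]

lemma inner_matVec_symm [DecidableEq ι] {A : Matrix ι ι ℝ} (hA : Aᵀ = A) (x y : EuclideanSpace ℝ ι) :
    ⟪matVec A x, y⟫ = ⟪matVec A y, x⟫ := by
  rw [inner_matVec_left, hA, real_inner_comm]

lemma inner_matVec_posDef_nonneg [DecidableEq ι] {A : Matrix ι ι ℝ} (hA : A.PosDef)
    (x : EuclideanSpace ℝ ι) :
    0 ≤ ⟪matVec A x, x⟫ := by
  have := hA.posSemidef.dotProduct_mulVec_nonneg x.ofLp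
  simpa [matVec, Matrix.toLpLin_apply, EuclideanSpace.inner_eq_star_dotProduct] using this

lemma transpose_eq_of_posDef {ι : Type*} {A : Matrix ι ι ℝ} (hA : A.PosDef) : Aᵀ = A := by
  simpa [Matrix.IsHermitian] using hA.1

end MatVec

/-! ### The pseudoinverse of a symmetric matrix -/

section Pinv

variable {ι κ : Type*} [Fintype ι] [Fintype κ]

lemma IsMoorePenrose.unique {A : Matrix ι κ ℝ} {B B' : Matrix κ ι ℝ}
    (h : IsMoorePenrose A B) (h' : IsMoorePenrose A B') : B = B' := by
  obtain ⟨h1, h2, h3, h4⟩ := h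
  obtain ⟨h1', h2', h3', h4'⟩ := h'
  have e1 : A * B' = A * B := by
    calc A * B' = (A * B')ᵀ := h3'.symm
      _ = ((A * B) * (A * B'))ᵀ := by rw [← Matrix.mul_assoc, h1]
      _ = (A * B') * (A * B) := by rw [Matrix.transpose_mul, h3, h3']
      _ = A * B := by rw [← Matrix.mul_assoc, h1']
  have e2 : B' * A = B * A := by
    calc B' * A = (B' * A)ᵀ := h4'.symm
      _ = ((B' * A) * (B * A))ᵀ := by
          rw [Matrix.mul_assoc B', ← Matrix.mul_assoc A, h1]
      _ = (B * A) * (B' * A) := by rw [Matrix.transpose_mul, h4, h4']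
      _ = B * A := by rw [Matrix.mul_assoc, ← Matrix.mul_assoc A, h1']
  calc B = B * A * B := h2.symm
    _ = B' * A * B' := by rw [← e2, Matrix.mul_assoc, ← e1, Matrix.mul_assoc]
    _ = B' := h2'

lemma IsMoorePenrose.transpose {A : Matrix ι κ ℝ} {B : Matrix κ ι ℝ}
    (h : IsMoorePenrose A B) : IsMoorePenrose Aᵀ Bᵀ := by
  obtain ⟨h1, h2, h3, h4⟩ := h
  refine ⟨?_, ?_, ?_, ?_⟩
  · rw [← Matrix.transpose_mul, ← Matrix.transpose_mul, ← Matrix.mul_assoc, h1]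
  · rw [← Matrix.transpose_mul, ← Matrix.transpose_mul, ← Matrix.mul_assoc, h2]
  · rw [← Matrix.transpose_mul, h4, h4]
  · rw [← Matrix.transpose_mul, h3, h3]

/-- For a symmetric matrix `U diag(λ) Uᵀ` the pseudoinverse is `U diag(λ⁻¹) Uᵀ`, where the
convention `0⁻¹ = 0` is exactly what is needed. -/
lemma exists_isMoorePenrose_of_symm [DecidableEq ι] {A : Matrix ι ι ℝ} (hA : Aᵀ = A) :
    ∃ B, IsMoorePenrose A B := by
  have hH : A.IsHermitian := by simpa [Matrix.IsHermitian] using hA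
  set U : Matrix ι ι ℝ := (hH.eigenvectorUnitary).1 with hU
  set l := hH.eigenvalues with hl
  have hUU : Uᵀ * U = 1 := by
    have := Unitary.coe_star_mul_self hH.eigenvectorUnitary
    simpa [Matrix.star_eq_conjTranspose] using this
  have hAU : A = U * diagonal l * Uᵀ := by
    have := hH.spectral_theorem
    rw [Unitary.conjStarAlgAut_apply] at this
    simpa [Matrix.star_eq_conjTranspose, Function.comp_def] using this
  have hmul : ∀ d e : ι → ℝ, (U * diagonal d * Uᵀ) * (U * diagonal e * Uᵀ)
      = U * diagonal (fun i => d i * e i) * Uᵀ := by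
    intro d e
    calc (U * diagonal d * Uᵀ) * (U * diagonal e * Uᵀ)
        = U * diagonal d * (Uᵀ * U) * diagonal e * Uᵀ := by simp only [Matrix.mul_assoc]
      _ = _ := by rw [hUU, Matrix.mul_one, Matrix.mul_assoc U, Matrix.diagonal_mul_diagonal]
  have htr : ∀ d : ι → ℝ, (U * diagonal d * Uᵀ)ᵀ = U * diagonal d * Uᵀ := by
    intro d
    simp [Matrix.transpose_mul, Matrix.mul_assoc]
  refine ⟨U * diagonal (fun i => (l i)⁻¹) * Uᵀ, ?_⟩
  rw [hAU]
  refine ⟨?_, ?_, ?_, ?_⟩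
  · simp only [hmul, mul_inv_mul_cancel]
  · simp only [hmul]
    congr 3
    funext i
    simpa using mul_inv_mul_cancel ((l i)⁻¹)
  · rw [hmul, htr]
  · rw [hmul, htr]

lemma isMoorePenrose_pinv [DecidableEq ι] {A : Matrix ι ι ℝ} (hA : Aᵀ = A) :
    IsMoorePenrose A (pinv A) := by
  have h := exists_isMoorePenrose_of_symm hA
  rw [pinv, dif_pos h]
  exact h.choose_spec

lemma transpose_pinv [DecidableEq ι] {A : Matrix ι ι ℝ} (hA : Aᵀ = A) :
    (pinv A)ᵀ = pinv A := by
  have h := (isMoorePenrose_pinv hA).transpose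
  rw [hA] at h
  exact h.unique (isMoorePenrose_pinv hA)

end Pinv

/-! ### Quadratic polynomials bounded below -/

section Quadratic

variable {ι : Type*} [Fintype ι] [DecidableEq ι]

/-- A real quadratic polynomial that is nonnegative everywhere has a nonnegative leading form. -/
lemma leadingForm_nonneg {P : Matrix ι ι ℝ} {b : EuclideanSpace ℝ ι} {c : ℝ}
    (h : ∀ x, 0 ≤ ⟪matVec P x, x⟫ - 2 * ⟪b, x⟫ + c) (x : EuclideanSpace ℝ ι) :
    0 ≤ ⟪matVec P x, x⟫ := by
  by_contra! hx
  -- Averaging over `t • x` and `-t • x` removes the linear term: `t² (Px, x) + c ≥ 0` for all `t`.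
  have key : ∀ t : ℝ, 0 ≤ t ^ 2 * ⟪matVec P x, x⟫ + c := by
    intro t
    have h1 := h (t • x)
    have h2 := h ((-t) • x)
    simp only [matVec_smul, inner_smul_left, inner_smul_right, conj_trivial] at h1 h2
    nlinarith
  set q := ⟪matVec P x, x⟫
  have hc : 0 ≤ c := by simpa using key 0
  have h3 := key (Real.sqrt ((c + 1) / (-q)))
  rw [Real.sq_sqrt (by apply div_nonneg <;> linarith)] at h3
  have : (c + 1) / (-q) * q = -(c + 1) := by
    have hq : q ≠ 0 := hx.ne
    field_simp
  linarith

/-- If `(Px, x) - 2(b, x) + c` is bounded below then `b` lies in the range of `P`: otherwise the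
component of `b` in `ker P` is a direction of unbounded linear decrease. -/
lemma matVec_pinv_of_nonneg {P : Matrix ι ι ℝ} (hP : Pᵀ = P) {b : EuclideanSpace ℝ ι} {c : ℝ}
    (h : ∀ x, 0 ≤ ⟪matVec P x, x⟫ - 2 * ⟪b, x⟫ + c) :
    matVec P (matVec (pinv P) b) = b := by
  obtain ⟨h1, -, h3, -⟩ := isMoorePenrose_pinv hP
  set u := b - matVec P (matVec (pinv P) b) with hu
  have hPP : P * (P * pinv P) = P := by
    have := congrArg Matrix.transpose h1
    rwa [Matrix.transpose_mul, h3, hP] at this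
  have hPu : matVec P u = 0 := by
    rw [hu, matVec_sub, ← matVec_mul P (pinv P), ← matVec_mul P (P * pinv P), hPP, sub_self]
  have hbu : ⟪b, u⟫ = ⟪u, u⟫ := by
    have : ⟪matVec P (matVec (pinv P) b), u⟫ = 0 := by
      rw [inner_matVec_left, hP, hPu, inner_zero_right]
    conv_rhs => rw [hu, inner_sub_left, ← hu, this, sub_zero]
  have key : ∀ t : ℝ, 0 ≤ - 2 * (t * ⟪u, u⟫) + c := by
    intro t
    have := h (t • u)
    simpa [matVec_smul, hPu, inner_smul_right, hbu] using this
  have hu0 : u = 0 := by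
    by_contra hne
    have hpos : 0 < ⟪u, u⟫ := real_inner_self_pos.mpr hne
    have h4 := key ((c + 1) / ⟪u, u⟫)
    rw [div_mul_cancel₀ _ hpos.ne'] at h4
    have hc : 0 ≤ c := by simpa using key 0
    linarith
  exact (sub_eq_zero.mp hu0).symm

/-- Completing the square at a critical point. -/
lemma complete_square {P : Matrix ι ι ℝ} (hP : Pᵀ = P) {b x₀ : EuclideanSpace ℝ ι}
    (hx₀ : matVec P x₀ = b) (x : EuclideanSpace ℝ ι) :
    ⟪matVec P x, x⟫ - 2 * ⟪b, x⟫ =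
      ⟪matVec P (x - x₀), x - x₀⟫ - ⟪matVec P x₀, x₀⟫ := by
  have := inner_matVec_symm hP x x₀
  simp only [matVec_sub, inner_sub_left, inner_sub_right, ← hx₀]
  linarith

end Quadratic

/-! ### The value function -/

section DynamicProgramming

variable {m n p : ℕ} (F C : ℕ → Matrix (Fin m) (Fin n) ℝ)
  (Hm : ℕ → Matrix (Fin p) (Fin n) ℝ) (S0 : Matrix (Fin m) (Fin m) ℝ)
  (S : ℕ → Matrix (Fin m) (Fin m) ℝ) (R : ℕ → Matrix (Fin p) (Fin p) ℝ)
  (y : ℕ → EuclideanSpace ℝ (Fin p))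

/-- The quadratic cost of a trajectory, so that `GySeq` is its sublevel set at height `1`. -/
noncomputable def cost (N : ℕ) (x : ℕ → EuclideanSpace ℝ (Fin n)) : ℝ :=
  ⟪matVec S0 (matVec (F 0) (x 0)), matVec (F 0) (x 0)⟫ +
      (∑ i ∈ Finset.range N,
        ⟪matVec (S i) (matVec (F (i+1)) (x (i+1)) - matVec (C i) (x i)),
          matVec (F (i+1)) (x (i+1)) - matVec (C i) (x i)⟫) +
      (∑ i ∈ Finset.range (N+1),
        ⟪matVec (R i) (y i - matVec (Hm i) (x i)),
          y i - matVec (Hm i) (x i)⟫)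

/-- The quadratic polynomial `(Q_k z, z) - 2 (r_k, z) + α_k`. It is the value function: the least
cost of a trajectory ending in `z` at time `k`. -/
noncomputable def valueFn (k : ℕ) (z : EuclideanSpace ℝ (Fin n)) : ℝ :=
  ⟪matVec (Qmat F C Hm S0 S R k) z, z⟫ - 2 * ⟪rvec F C Hm S0 S R y k, z⟫ +
    alphaNum F C Hm S0 S R y k

lemma cost_succ (N : ℕ) (x : ℕ → EuclideanSpace ℝ (Fin n)) :
    cost F C Hm S0 S R y (N + 1) x = cost F C Hm S0 S R y N x +
      ⟪matVec (S N) (matVec (F (N+1)) (x (N+1)) - matVec (C N) (x N)),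
          matVec (F (N+1)) (x (N+1)) - matVec (C N) (x N)⟫ +
      ⟪matVec (R (N+1)) (y (N+1) - matVec (Hm (N+1)) (x (N+1))),
          y (N+1) - matVec (Hm (N+1)) (x (N+1))⟫ := by
  simp only [cost, Finset.sum_range_succ _ N, Finset.sum_range_succ _ (N + 1)]
  ring

lemma Qmat_succ (k : ℕ) :
    Qmat F C Hm S0 S R (k + 1) = (Hm (k+1))ᵀ * R (k+1) * Hm (k+1) +
      (F (k+1))ᵀ * (S k - S k * C k * pinv (Pmat F C Hm S0 S R k) * (C k)ᵀ * S k) *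
        F (k+1) := rfl

lemma cost_congr (N : ℕ) {x x' : ℕ → EuclideanSpace ℝ (Fin n)} (h : ∀ i ≤ N, x i = x' i) :
    cost F C Hm S0 S R y N x = cost F C Hm S0 S R y N x' := by
  unfold cost
  rw [h 0 (Nat.zero_le _)]
  congr 1
  · congr 1
    refine Finset.sum_congr rfl fun i hi => ?_
    have := Finset.mem_range.mp hi
    rw [h i (by omega), h (i + 1) (by omega)]
  · refine Finset.sum_congr rfl fun i hi => ?_
    have := Finset.mem_range.mp hi
    rw [h i (by omega)]

variable {F C Hm S0 S R y}

lemma cost_nonneg (hS0 : S0.PosDef) (hS : ∀ k, (S k).PosDef) (hR : ∀ k, (R k).PosDef)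
    (N : ℕ) (x : ℕ → EuclideanSpace ℝ (Fin n)) : 0 ≤ cost F C Hm S0 S R y N x := by
  unfold cost
  have h1 := inner_matVec_posDef_nonneg hS0 (matVec (F 0) (x 0))
  have h2 := Finset.sum_nonneg fun i (_ : i ∈ Finset.range N) =>
    inner_matVec_posDef_nonneg (hS i) (matVec (F (i+1)) (x (i+1)) - matVec (C i) (x i))
  have h3 := Finset.sum_nonneg fun i (_ : i ∈ Finset.range (N + 1)) =>
    inner_matVec_posDef_nonneg (hR i) (y i - matVec (Hm i) (x i))
  linarith

lemma transpose_Pmat_of_Qmat (hS : ∀ k, (S k).PosDef) {k : ℕ}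
    (hQ : (Qmat F C Hm S0 S R k)ᵀ = Qmat F C Hm S0 S R k) :
    (Pmat F C Hm S0 S R k)ᵀ = Pmat F C Hm S0 S R k := by
  simp [Pmat, hQ, transpose_eq_of_posDef (hS k), Matrix.mul_assoc]

lemma transpose_Qmat (hS0 : S0.PosDef) (hS : ∀ k, (S k).PosDef) (hR : ∀ k, (R k).PosDef)
    (k : ℕ) : (Qmat F C Hm S0 S R k)ᵀ = Qmat F C Hm S0 S R k := by
  induction k with
  | zero =>
    simp [Qmat, transpose_eq_of_posDef hS0, transpose_eq_of_posDef (hR 0), Matrix.mul_assoc]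
  | succ k ih =>
    have h := transpose_pinv (transpose_Pmat_of_Qmat hS ih)
    rw [Qmat_succ]
    simp [h, transpose_eq_of_posDef (hS k), transpose_eq_of_posDef (hR (k + 1)),
      Matrix.mul_assoc]

lemma transpose_Pmat (hS0 : S0.PosDef) (hS : ∀ k, (S k).PosDef) (hR : ∀ k, (R k).PosDef)
    (k : ℕ) : (Pmat F C Hm S0 S R k)ᵀ = Pmat F C Hm S0 S R k :=
  transpose_Pmat_of_Qmat hS (transpose_Qmat hS0 hS hR k)

lemma valueFn_zero (hR : ∀ k, (R k).PosDef) (x : ℕ → EuclideanSpace ℝ (Fin n)) :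
    cost F C Hm S0 S R y 0 x = valueFn F C Hm S0 S R y 0 (x 0) := by
  have hsymm := inner_matVec_symm (transpose_eq_of_posDef (hR 0)) (y 0) (matVec (Hm 0) (x 0))
  simp only [cost, valueFn, Qmat, rvec, alphaNum, Finset.range_zero, Finset.sum_empty, zero_add,
    Finset.sum_range_one, matVec_add_left, matVec_mul, inner_add_left,
    inner_matVec_left (_ᵀ), Matrix.transpose_transpose, matVec_sub, inner_sub_left,
    inner_sub_right]
  linarith

/-- The part of the Bellman cost that depends on the previous state `x` is a quadratic polynomial
with leading form `P_k` and linear part `r_k + C_k' S_k s`, where `s = F_{k+1} z`. -/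
lemma valueFn_add_transition (hS : ∀ k, (S k).PosDef) (k : ℕ) (x : EuclideanSpace ℝ (Fin n))
    (s : EuclideanSpace ℝ (Fin m)) :
    valueFn F C Hm S0 S R y k x + ⟪matVec (S k) (s - matVec (C k) x), s - matVec (C k) x⟫ =
      ⟪matVec (Pmat F C Hm S0 S R k) x, x⟫ -
        2 * ⟪rvec F C Hm S0 S R y k + matVec ((C k)ᵀ * S k) s, x⟫ +
        (alphaNum F C Hm S0 S R y k + ⟪matVec (S k) s, s⟫) := by
  have hsymm := inner_matVec_symm (transpose_eq_of_posDef (hS k)) s (matVec (C k) x)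
  simp only [valueFn, Pmat, matVec_add_left, matVec_mul, inner_add_left,
    inner_matVec_left (_ᵀ), Matrix.transpose_transpose, matVec_sub, inner_sub_left,
    inner_sub_right]
  linarith

/-- The Bellman equation: the minimum over the previous state, at `P_k⁺ (r_k + C_k' S_k F_{k+1} z)`,
reproduces the recursions for `Q`, `r` and `α`. -/
lemma valueFn_succ (hS0 : S0.PosDef) (hS : ∀ k, (S k).PosDef) (hR : ∀ k, (R k).PosDef)
    (k : ℕ) (z b : EuclideanSpace ℝ (Fin n))
    (hb : b = rvec F C Hm S0 S R y k + matVec ((C k)ᵀ * S k) (matVec (F (k+1)) z)) :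
    valueFn F C Hm S0 S R y (k + 1) z =
      alphaNum F C Hm S0 S R y k + ⟪matVec (S k) (matVec (F (k+1)) z), matVec (F (k+1)) z⟫ -
      ⟪matVec (pinv (Pmat F C Hm S0 S R k)) b, b⟫ +
      ⟪matVec (R (k+1)) (y (k+1) - matVec (Hm (k+1)) z), y (k+1) - matVec (Hm (k+1)) z⟫ := by
  have hA := transpose_pinv (transpose_Pmat (F := F) (C := C) (Hm := Hm) hS0 hS hR k)
  have h1 := inner_matVec_symm (transpose_eq_of_posDef (hR (k+1))) (y (k+1))
    (matVec (Hm (k+1)) z)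
  have h2 := inner_matVec_symm hA (rvec F C Hm S0 S R y k)
    (matVec (C k)ᵀ (matVec (S k) (matVec (F (k+1)) z)))
  -- Moves `S_k C_k` across the inner product.
  have h3 : ∀ u : EuclideanSpace ℝ (Fin n),
      ⟪matVec (S k) (matVec (C k) u), matVec (F (k+1)) z⟫ =
        ⟪u, matVec (C k)ᵀ (matVec (S k) (matVec (F (k+1)) z))⟫ := by
    intro u
    rw [inner_matVec_left, inner_matVec_left, transpose_eq_of_posDef (hS k)]
  rw [valueFn, Qmat_succ, hb]
  simp only [rvec, alphaNum, matVec_add_left, matVec_sub_left, matVec_mul, inner_add_left,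
    inner_matVec_left (_ᵀ), Matrix.transpose_transpose, matVec_add, matVec_sub, inner_sub_left,
    inner_sub_right, inner_add_right, h3] at *
  linarith

/-- `valueFn` is the value function: it bounds the cost from below, and the bound is attained for
every terminal state. -/
theorem valueFn_isLeast (hS0 : S0.PosDef) (hS : ∀ k, (S k).PosDef) (hR : ∀ k, (R k).PosDef)
    (N : ℕ) :
    (∀ x, valueFn F C Hm S0 S R y N (x N) ≤ cost F C Hm S0 S R y N x) ∧
    ∀ z, ∃ x, x N = z ∧ cost F C Hm S0 S R y N x = valueFn F C Hm S0 S R y N z := by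
  induction N with
  | zero =>
    exact ⟨fun x => (valueFn_zero hR x).ge, fun z => ⟨fun _ => z, rfl, valueFn_zero hR _⟩⟩
  | succ k ih =>
    obtain ⟨ih1, ih2⟩ := ih
    have hV : ∀ x, 0 ≤ valueFn F C Hm S0 S R y k x := by
      intro z
      obtain ⟨x, -, hx⟩ := ih2 z
      rw [← hx]
      exact cost_nonneg hS0 hS hR k x
    have hP := transpose_Pmat (F := F) (C := C) (Hm := Hm) hS0 hS hR k
    -- The Bellman cost is nonnegative, hence bounded below, as a function of the previous state.
    have hpos : ∀ z x : EuclideanSpace ℝ (Fin n), 0 ≤ ⟪matVec (Pmat F C Hm S0 S R k) x, x⟫ -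
        2 * ⟪rvec F C Hm S0 S R y k + matVec ((C k)ᵀ * S k) (matVec (F (k+1)) z), x⟫ +
        (alphaNum F C Hm S0 S R y k +
          ⟪matVec (S k) (matVec (F (k+1)) z), matVec (F (k+1)) z⟫) := by
      intro z x
      rw [← valueFn_add_transition hS]
      exact add_nonneg (hV x) (inner_matVec_posDef_nonneg (hS k) _)
    have hstep : ∀ z x b : EuclideanSpace ℝ (Fin n),
        b = rvec F C Hm S0 S R y k + matVec ((C k)ᵀ * S k) (matVec (F (k+1)) z) →
        valueFn F C Hm S0 S R y k x +
          ⟪matVec (S k) (matVec (F (k+1)) z - matVec (C k) x),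
            matVec (F (k+1)) z - matVec (C k) x⟫ +
          ⟪matVec (R (k+1)) (y (k+1) - matVec (Hm (k+1)) z), y (k+1) - matVec (Hm (k+1)) z⟫ =
        valueFn F C Hm S0 S R y (k + 1) z +
          ⟪matVec (Pmat F C Hm S0 S R k) (x - matVec (pinv (Pmat F C Hm S0 S R k)) b),
            x - matVec (pinv (Pmat F C Hm S0 S R k)) b⟫ := by
      intro z x b hb
      have hPb : matVec (Pmat F C Hm S0 S R k) (matVec (pinv (Pmat F C Hm S0 S R k)) b) = b := by
        rw [hb]
        exact matVec_pinv_of_nonneg hP (hpos z)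
      have hsq := complete_square hP hPb x
      rw [hPb] at hsq
      rw [valueFn_add_transition hS, valueFn_succ hS0 hS hR k z b hb, ← hb]
      rw [real_inner_comm b (matVec _ b)]
      linarith
    refine ⟨fun x => ?_, fun z => ?_⟩
    · have h1 := hstep (x (k+1)) (x k) _ rfl
      have h2 := leadingForm_nonneg (hpos (x (k+1))) (x k - matVec (pinv (Pmat F C Hm S0 S R k))
        (rvec F C Hm S0 S R y k + matVec ((C k)ᵀ * S k) (matVec (F (k+1)) (x (k+1)))))
      rw [cost_succ]
      linarith [ih1 x]
    · obtain ⟨x, hx, hcost⟩ := ih2 (matVec (pinv (Pmat F C Hm S0 S R k))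
        (rvec F C Hm S0 S R y k + matVec ((C k)ᵀ * S k) (matVec (F (k+1)) z)))
      refine ⟨Function.update x (k + 1) z, by simp, ?_⟩
      have hcongr : cost F C Hm S0 S R y k (Function.update x (k + 1) z) =
          cost F C Hm S0 S R y k x :=
        cost_congr _ _ _ _ _ _ _ _ fun i hi => Function.update_of_ne (by omega) _ _
      have hk : Function.update x (k + 1) z k = x k := Function.update_of_ne (by omega) _ _
      rw [cost_succ, hcongr, hk, Function.update_self, hcost, ← hx]
      have h1 := hstep z (x k) _ rfl
      rw [h1, ← hx]
      simp

end DynamicProgramming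

/-! ### The Chebyshev centre of an ellipsoid -/

section Ellipsoid

variable {n : ℕ} {Q : Matrix (Fin n) (Fin n) ℝ} (hQ : Q.IsHermitian)

lemma matVec_eigenvectorBasis (i : Fin n) :
    matVec Q (hQ.eigenvectorBasis i) = hQ.eigenvalues i • hQ.eigenvectorBasis i := by
  ext j
  simpa [matVec, Matrix.toLpLin_apply] using congrFun (hQ.mulVec_eigenvectorBasis i) j

lemma inner_matVec_eigenvectorBasis (i : Fin n) :
    ⟪matVec Q (hQ.eigenvectorBasis i), hQ.eigenvectorBasis i⟫ = hQ.eigenvalues i := by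
  rw [matVec_eigenvectorBasis, inner_smul_left, real_inner_self_eq_norm_sq]
  simp

lemma inner_matVec_eq_sum (x : EuclideanSpace ℝ (Fin n)) :
    ⟪matVec Q x, x⟫ = ∑ i, hQ.eigenvalues i * ⟪hQ.eigenvectorBasis i, x⟫ ^ 2 := by
  have hT : Qᵀ = Q := by simpa [Matrix.IsHermitian] using hQ
  rw [← hQ.eigenvectorBasis.sum_inner_mul_inner]
  refine Finset.sum_congr rfl fun i _ => ?_
  rw [inner_matVec_symm hT, matVec_eigenvectorBasis, inner_smul_left]
  simp only [conj_trivial]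
  ring

lemma iInf_eigenvalues_mul_le (x : EuclideanSpace ℝ (Fin n)) :
    (⨅ i, hQ.eigenvalues i) * ‖x‖ ^ 2 ≤ ⟪matVec Q x, x⟫ := by
  rw [inner_matVec_eq_sum hQ, ← hQ.eigenvectorBasis.sum_sq_norm_inner_right x, Finset.mul_sum]
  refine Finset.sum_le_sum fun i _ => ?_
  rw [Real.norm_eq_abs, sq_abs]
  exact mul_le_mul_of_nonneg_right (ciInf_le (Set.finite_range _).bddBelow i) (sq_nonneg _)

/-- Points of the ellipsoid `(Qd, d) ≤ β` have norm at most `√β / √(λ_min)`. In dimension `0` the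
junk value `λ_min = 0` gives the correct radius `0`. -/
lemma norm_le_of_inner_matVec_le (hpos : ∀ i, 0 < hQ.eigenvalues i) {β : ℝ}
    {d : EuclideanSpace ℝ (Fin n)} (hd : ⟪matVec Q d, d⟫ ≤ β) :
    ‖d‖ ≤ Real.sqrt β / Real.sqrt (⨅ i, hQ.eigenvalues i) := by
  rcases isEmpty_or_nonempty (Fin n) with hn | hn
  · rw [Subsingleton.elim d 0, norm_zero]
    positivity
  · obtain ⟨i₀, hi₀⟩ := exists_eq_ciInf_of_finite (f := hQ.eigenvalues)
    have h := iInf_eigenvalues_mul_le hQ d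
    rw [← hi₀] at h ⊢
    have hl := hpos i₀
    rw [le_div_iff₀ (Real.sqrt_pos.mpr hl)]
    apply Real.le_sqrt_of_sq_le
    rw [mul_pow, Real.sq_sqrt hl.le]
    linarith

/-- The radius is attained, at a multiple of an eigenvector for `λ_min`. -/
lemma exists_norm_eq_of_inner_matVec_le (hpos : ∀ i, 0 < hQ.eigenvalues i) {β : ℝ}
    (hβ : 0 ≤ β) : ∃ d : EuclideanSpace ℝ (Fin n), ⟪matVec Q d, d⟫ ≤ β ∧
      ‖d‖ = Real.sqrt β / Real.sqrt (⨅ i, hQ.eigenvalues i) := by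
  rcases isEmpty_or_nonempty (Fin n) with hn | hn
  · exact ⟨0, by simpa using hβ, by simp [Real.iInf_of_isEmpty]⟩
  · obtain ⟨i₀, hi₀⟩ := exists_eq_ciInf_of_finite (f := hQ.eigenvalues)
    have hl := hpos i₀
    rw [← hi₀]
    refine ⟨(Real.sqrt β / Real.sqrt (hQ.eigenvalues i₀)) • hQ.eigenvectorBasis i₀, ?_, ?_⟩
    · rw [matVec_smul, inner_smul_left, inner_smul_right, inner_matVec_eigenvectorBasis,
        conj_trivial, ← mul_assoc, ← sq, div_pow, Real.sq_sqrt hβ, Real.sq_sqrt hl.le,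
        div_mul_cancel₀ _ hl.ne']
    · rw [norm_smul, hQ.eigenvectorBasis.norm_eq_one, mul_one, Real.norm_of_nonneg (by positivity)]

/-- A nonempty ellipsoid has its centre as Chebyshev centre. Any competitor `v` is at distance at
least `‖d‖` from one of the antipodal points `c ± d`. -/
theorem chebyshev_ellipsoid (hpos : ∀ i, 0 < hQ.eigenvalues i) {β : ℝ} (hβ : 0 ≤ β)
    (c : EuclideanSpace ℝ (Fin n)) {E : Set (EuclideanSpace ℝ (Fin n))}
    (hE : ∀ v, v ∈ E ↔ ⟪matVec Q (v - c), v - c⟫ ≤ β) :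
    (⨅ v ∈ E, ⨆ w ∈ E, ENNReal.ofReal ‖v - w‖) = (⨆ w ∈ E, ENNReal.ofReal ‖w - c‖) ∧
    (⨆ w ∈ E, ENNReal.ofReal ‖w - c‖) =
      ENNReal.ofReal (Real.sqrt β / Real.sqrt (⨅ i, hQ.eigenvalues i)) := by
  obtain ⟨d, hd, hdn⟩ := exists_norm_eq_of_inner_matVec_le hQ hpos hβ
  have hplus : c + d ∈ E := by rw [hE]; simpa using hd
  have hminus : c - d ∈ E := by
    rw [hE]
    have : c - d - c = (-1 : ℝ) • d := by rw [neg_one_smul]; abel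
    rw [this, matVec_smul, inner_smul_left, inner_smul_right]
    simpa using hd
  have hc : c ∈ E := by rw [hE]; simpa using hβ
  have hrad : (⨆ w ∈ E, ENNReal.ofReal ‖w - c‖) =
      ENNReal.ofReal (Real.sqrt β / Real.sqrt (⨅ i, hQ.eigenvalues i)) := by
    apply le_antisymm
    · refine iSup₂_le fun w hw => ENNReal.ofReal_le_ofReal ?_
      exact norm_le_of_inner_matVec_le hQ hpos ((hE w).mp hw)
    · refine le_iSup₂_of_le (c + d) hplus ?_
      rw [add_sub_cancel_left, hdn]
  refine ⟨le_antisymm ?_ ?_, hrad⟩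
  · refine iInf₂_le_of_le c hc ?_
    simp only [norm_sub_rev c]
    exact le_rfl
  · rw [hrad, ← hdn]
    refine le_iInf₂ fun v _ => ?_
    have htri : 2 * ‖d‖ ≤ ‖v - (c - d)‖ + ‖v - (c + d)‖ := by
      calc 2 * ‖d‖ = ‖(2 : ℝ) • d‖ := by rw [norm_smul]; simp
        _ = ‖(v - (c - d)) - (v - (c + d))‖ := by congr 1; rw [two_smul]; abel
        _ ≤ _ := norm_sub_le _ _
    rcases le_total ‖v - (c - d)‖ ‖v - (c + d)‖ with h | h
    · exact le_iSup₂_of_le (c + d) hplus (ENNReal.ofReal_le_ofReal (by linarith))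
    · exact le_iSup₂_of_le (c - d) hminus (ENNReal.ofReal_le_ofReal (by linarith))

end Ellipsoid

/-!
**Proposition 3 (Chebyshev center of `P_N`):** if `rank Q_N = n` then
`x̂_N = Q_N⁺ r_N` is the Chebyshev center of `P_N` and
`min_{x∈P_N} max_{x̃∈P_N} ‖x − x̃‖ = max_{x∈P_N} ‖x − x̂_N‖
  = [1 − α_N + (Q_N x̂_N, x̂_N)]^{1/2} / min_i λ_i(N)^{1/2}`.
-/

/-- **Proposition 3 (Chebyshev center and radius of `P_N`).** -/
theorem aposteriori_section_chebyshev_center {m n p : ℕ}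
    (F C : ℕ → Matrix (Fin m) (Fin n) ℝ)
    (Hm : ℕ → Matrix (Fin p) (Fin n) ℝ)
    (S0 : Matrix (Fin m) (Fin m) ℝ) (hS0 : S0.PosDef)
    (S : ℕ → Matrix (Fin m) (Fin m) ℝ) (hS : ∀ k, (S k).PosDef)
    (R : ℕ → Matrix (Fin p) (Fin p) ℝ) (hR : ∀ k, (R k).PosDef)
    (y : ℕ → EuclideanSpace ℝ (Fin p)) (N : ℕ)
    (hne : (GySeq F C Hm S0 S R y N).Nonempty)
    (hrank : (Qmat F C Hm S0 S R N).rank = n)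
    (hherm : (Qmat F C Hm S0 S R N).IsHermitian) :
    (⨅ (v : EuclideanSpace ℝ (Fin n))
        (_ : v ∈ {v | ∃ x ∈ GySeq F C Hm S0 S R y N, x N = v}),
      ⨆ (w : EuclideanSpace ℝ (Fin n))
        (_ : w ∈ {v | ∃ x ∈ GySeq F C Hm S0 S R y N, x N = v}),
        ENNReal.ofReal ‖v - w‖)
      = (⨆ (w : EuclideanSpace ℝ (Fin n))
          (_ : w ∈ {v | ∃ x ∈ GySeq F C Hm S0 S R y N, x N = v}),
          ENNReal.ofReal
            ‖w - matVec (pinv (Qmat F C Hm S0 S R N))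
                (rvec F C Hm S0 S R y N)‖) ∧
    (⨆ (w : EuclideanSpace ℝ (Fin n))
        (_ : w ∈ {v | ∃ x ∈ GySeq F C Hm S0 S R y N, x N = v}),
        ENNReal.ofReal
          ‖w - matVec (pinv (Qmat F C Hm S0 S R N))
              (rvec F C Hm S0 S R y N)‖)
      = ENNReal.ofReal
          (Real.sqrt (1 - alphaNum F C Hm S0 S R y N +
              ⟪matVec (Qmat F C Hm S0 S R N)
                  (matVec (pinv (Qmat F C Hm S0 S R N))
                    (rvec F C Hm S0 S R y N)),
                matVec (pinv (Qmat F C Hm S0 S R N))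
                  (rvec F C Hm S0 S R y N)⟫) /
            Real.sqrt (⨅ i : Fin n, hherm.eigenvalues i)) := by
  have hQT := transpose_Qmat (F := F) (C := C) (Hm := Hm) hS0 hS hR N
  obtain ⟨hle, hatt⟩ := valueFn_isLeast (F := F) (C := C) (Hm := Hm) (y := y) hS0 hS hR N
  have hV : ∀ z, 0 ≤ valueFn F C Hm S0 S R y N z := by
    intro z
    obtain ⟨x, -, hx⟩ := hatt z
    rw [← hx]
    exact cost_nonneg hS0 hS hR N x
  have hr := matVec_pinv_of_nonneg hQT hV
  set c := matVec (pinv (Qmat F C Hm S0 S R N)) (rvec F C Hm S0 S R y N) with hc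
  set β := 1 - alphaNum F C Hm S0 S R y N + ⟪matVec (Qmat F C Hm S0 S R N) c, c⟫ with hβdef
  have hE : ∀ v, v ∈ {v | ∃ x ∈ GySeq F C Hm S0 S R y N, x N = v} ↔
      ⟪matVec (Qmat F C Hm S0 S R N) (v - c), v - c⟫ ≤ β := by
    intro v
    have hiff : v ∈ {v | ∃ x ∈ GySeq F C Hm S0 S R y N, x N = v} ↔
        valueFn F C Hm S0 S R y N v ≤ 1 := by
      constructor
      · rintro ⟨x, hx, rfl⟩
        exact (hle x).trans hx
      · intro hv
        obtain ⟨x, hx, hcost⟩ := hatt v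
        exact ⟨x, show cost F C Hm S0 S R y N x ≤ 1 from hcost.trans_le hv, hx⟩
    have hsq := complete_square hQT hr v
    rw [hiff, valueFn, hsq, hβdef]
    constructor <;> intro h <;> linarith
  have hpsd := leadingForm_nonneg hV
  have hβ : 0 ≤ β := by
    obtain ⟨x, hx⟩ := hne
    exact (hpsd _).trans ((hE (x N)).mp ⟨x, hx, rfl⟩)
  -- Full rank excludes zero eigenvalues, so the nonnegative eigenvalues are positive.
  have hpos : ∀ i, 0 < hherm.eigenvalues i := by
    intro i
    refine lt_of_le_of_ne ?_ (Ne.symm ?_)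
    · rw [← inner_matVec_eigenvectorBasis hherm i]
      exact hpsd _
    · rw [hherm.rank_eq_card_non_zero_eigs] at hrank
      by_contra hi
      have : Fintype.card {i // hherm.eigenvalues i ≠ 0} < Fintype.card (Fin n) :=
        Fintype.card_subtype_lt (x := i) (by simpa using hi)
      rw [hrank, Fintype.card_fin] at this
      exact lt_irrefl _ this
  exact chebyshev_ellipsoid hherm hpos hβ c hE
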